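/- Let d, n ≥ 1, ε ∈ (0,1), r > 0. For ω ∈ {−1,1}^d let g_ω(x) = (1−ε)φ_d(x) + ε·φ_d(x − (r/√d)·ω), and let L_π(X₁,…,Xₙ) = 2^{−d}·Σ_{ω∈{−1,1}^d} ∏_{i=1}^n [ (1−ε) + ε·φ_d(X_i − (r/√d)ω)/φ_d(X_i) ] be the likelihood ratio of the uniform mixture over ω against the standard Gaussian null. Then E₀[L_π(X₁,…,Xₙ)²] = E[ (1 + ε²·(e^{(r²/d)·Y} − 1))^n ], where Y = Σ_{j=1}^d W_j with W₁,…,W_d i.i.d. Rademacher random variables (P(W_j = 1) = P(W_j = −1) = 1/2). -/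

import Mathlib

open MeasureTheory Real

noncomputable section

/-- Density of the standard Gaussian distribution `N_d(0_d, I_d)` on `ℝ^d`. -/
def gaussDensity (d : ℕ) (x : EuclideanSpace ℝ (Fin d)) : ℝ :=
  (2 * π) ^ (-(d : ℝ) / 2) * Real.exp (-‖x‖ ^ 2 / 2)

/-- The standard Gaussian measure on `ℝ^d`. -/
def gaussMeasure (d : ℕ) : Measure (EuclideanSpace ℝ (Fin d)) :=
  volume.withDensity fun x => ENNReal.ofReal (gaussDensity d x)

/-- The Rademacher distribution on `ℝ`: `P({1}) = P({-1}) = 1/2`. -/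
def radem : Measure ℝ :=
  (2 : ENNReal)⁻¹ • Measure.dirac (1 : ℝ) + (2 : ENNReal)⁻¹ • Measure.dirac (-1 : ℝ)

/-- The sign vector of `ℝ^d` associated to `ω ∈ {-1,1}^d` (coded by booleans). -/
def sgnVec {d : ℕ} (ω : Fin d → Bool) : EuclideanSpace ℝ (Fin d) :=
  (WithLp.equiv 2 (Fin d → ℝ)).symm fun j => if ω j then 1 else -1

/-- The likelihood ratio `L_π` of the uniform mixture of the alternatives
`g_ω = (1-ε)φ_d + ε·φ_d(· - (r/√d)ω)`, `ω ∈ {-1,1}^d`, against the standard Gaussian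
null, evaluated at the sample `X = (X₁,…,Xₙ)`. -/
def likRatioRadem (d n : ℕ) (ε r : ℝ) (X : Fin n → EuclideanSpace ℝ (Fin d)) : ℝ :=
  ((2 : ℝ) ^ d)⁻¹ * ∑ ω : Fin d → Bool, ∏ i,
    ((1 - ε) + ε * gaussDensity d (X i - (r / Real.sqrt d) • sgnVec ω) / gaussDensity d (X i))

/-- The Gaussian moment generating function. -/
theorem integral_exp_inner_gaussMeasure {d : ℕ} (v : EuclideanSpace ℝ (Fin d)) :
    ∫ x, Real.exp (inner ℝ v x) ∂gaussMeasure d = Real.exp (‖v‖ ^ 2 / 2) := by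
  have hcont : Continuous (gaussDensity d) := by
    unfold gaussDensity
    fun_prop
  have hnonneg (x : EuclideanSpace ℝ (Fin d)) : 0 ≤ gaussDensity d x := by
    unfold gaussDensity
    positivity
  have hpi : (2 * π) ^ (-(d : ℝ) / 2) * (π / (1 / 2)) ^ ((d : ℝ) / 2) = 1 := by
    rw [show π / (1 / 2) = 2 * π by ring, ← Real.rpow_add (by positivity)]
    ring_nf
    simp
  rw [gaussMeasure, integral_withDensity_eq_integral_toReal_smul
    hcont.measurable.ennreal_ofReal (by simp)]
  have hexp (x : EuclideanSpace ℝ (Fin d)) :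
      (ENNReal.ofReal (gaussDensity d x)).toReal • Real.exp (inner ℝ v x) =
        (2 * π) ^ (-(d : ℝ) / 2) * (Real.exp (‖v‖ ^ 2 / 2) *
          Real.exp (-(1 / 2) * ‖x - v‖ ^ 2)) := by
    rw [ENNReal.toReal_ofReal (hnonneg x), smul_eq_mul, gaussDensity, mul_assoc, ← Real.exp_add,
      ← Real.exp_add, norm_sub_sq_real, real_inner_comm]
    ring_nf
  simp_rw [hexp]
  rw [integral_const_mul, integral_const_mul,
    integral_sub_right_eq_self (fun x => Real.exp (-(1 / 2) * ‖x‖ ^ 2)),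
    GaussianFourier.integral_rexp_neg_mul_sq_norm (by norm_num), finrank_euclideanSpace_fin]
  linear_combination Real.exp (‖v‖ ^ 2 / 2) * hpi

theorem integrable_exp_inner_gaussMeasure {d : ℕ} (v : EuclideanSpace ℝ (Fin d)) :
    Integrable (fun x => Real.exp (inner ℝ v x)) (gaussMeasure d) :=
  .of_integral_ne_zero (by rw [integral_exp_inner_gaussMeasure]; positivity)

instance isProbabilityMeasure_gaussMeasure (d : ℕ) : IsProbabilityMeasure (gaussMeasure d) := by
  have h := integral_exp_inner_gaussMeasure (0 : EuclideanSpace ℝ (Fin d))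
  simp only [inner_zero_left, Real.exp_zero, integral_const, smul_eq_mul, mul_one, norm_zero,
    ne_eq, OfNat.ofNat_ne_zero, not_false_eq_true, zero_pow, zero_div] at h
  exact ⟨(ENNReal.toReal_eq_one_iff _).1 h⟩

/-- Density ratio of a shifted Gaussian against the standard Gaussian. -/
theorem gaussDensity_sub_div {d : ℕ} (x v : EuclideanSpace ℝ (Fin d)) :
    gaussDensity d (x - v) / gaussDensity d x =
      Real.exp (-‖v‖ ^ 2 / 2) * Real.exp (inner ℝ v x) := by
  have hpos : (0 : ℝ) < (2 * π) ^ (-(d : ℝ) / 2) := by positivity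
  rw [gaussDensity, gaussDensity, mul_div_mul_left _ _ hpos.ne', ← Real.exp_sub, ← Real.exp_add,
    norm_sub_sq_real, real_inner_comm]
  ring_nf

/-- Product of the contaminated density ratios, expanded in exponentials of linear forms. -/
theorem contaminated_ratio_mul {d : ℕ} (ε : ℝ) (u v x : EuclideanSpace ℝ (Fin d)) :
    ((1 - ε) + ε * gaussDensity d (x - u) / gaussDensity d x) *
        ((1 - ε) + ε * gaussDensity d (x - v) / gaussDensity d x) =
      (1 - ε) ^ 2 + (1 - ε) * ε * Real.exp (-‖u‖ ^ 2 / 2) * Real.exp (inner ℝ u x) +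
        (1 - ε) * ε * Real.exp (-‖v‖ ^ 2 / 2) * Real.exp (inner ℝ v x) +
        ε ^ 2 * Real.exp (-‖u‖ ^ 2 / 2) * Real.exp (-‖v‖ ^ 2 / 2) *
          Real.exp (inner ℝ (u + v) x) := by
  rw [mul_div_assoc, mul_div_assoc, gaussDensity_sub_div, gaussDensity_sub_div, inner_add_left,
    Real.exp_add]
  ring

theorem integrable_contaminated_ratio_mul {d : ℕ} (ε : ℝ) (u v : EuclideanSpace ℝ (Fin d)) :
    Integrable (fun x => ((1 - ε) + ε * gaussDensity d (x - u) / gaussDensity d x) *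
      ((1 - ε) + ε * gaussDensity d (x - v) / gaussDensity d x)) (gaussMeasure d) := by
  simp_rw [contaminated_ratio_mul]
  exact (((integrable_const _).add ((integrable_exp_inner_gaussMeasure u).const_mul _)).add
    ((integrable_exp_inner_gaussMeasure v).const_mul _)).add
      ((integrable_exp_inner_gaussMeasure (u + v)).const_mul _)

theorem integral_contaminated_ratio_mul {d : ℕ} (ε : ℝ) (u v : EuclideanSpace ℝ (Fin d)) :
    ∫ x, ((1 - ε) + ε * gaussDensity d (x - u) / gaussDensity d x) *
        ((1 - ε) + ε * gaussDensity d (x - v) / gaussDensity d x) ∂gaussMeasure d =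
      1 + ε ^ 2 * (Real.exp (inner ℝ u v) - 1) := by
  have hu := (integrable_exp_inner_gaussMeasure u).const_mul
    ((1 - ε) * ε * Real.exp (-‖u‖ ^ 2 / 2))
  have hv := (integrable_exp_inner_gaussMeasure v).const_mul
    ((1 - ε) * ε * Real.exp (-‖v‖ ^ 2 / 2))
  have huv := (integrable_exp_inner_gaussMeasure (u + v)).const_mul
    (ε ^ 2 * Real.exp (-‖u‖ ^ 2 / 2) * Real.exp (-‖v‖ ^ 2 / 2))
  have hc : Integrable (fun _ => (1 - ε) ^ 2) (gaussMeasure d) := integrable_const _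
  have hcancel (w : EuclideanSpace ℝ (Fin d)) :
      Real.exp (-‖w‖ ^ 2 / 2) * Real.exp (‖w‖ ^ 2 / 2) = 1 := by
    rw [← Real.exp_add]
    ring_nf
    simp
  have hsum : Real.exp (‖u + v‖ ^ 2 / 2) =
      Real.exp (‖u‖ ^ 2 / 2) * Real.exp (‖v‖ ^ 2 / 2) * Real.exp (inner ℝ u v) := by
    rw [← Real.exp_add, ← Real.exp_add, norm_add_sq_real]
    ring_nf
  simp_rw [contaminated_ratio_mul]
  rw [integral_add ((hc.fun_add hu).fun_add hv) huv, integral_add (hc.fun_add hu) hv,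
    integral_add hc hu,
    integral_const_mul, integral_const_mul, integral_const_mul, integral_exp_inner_gaussMeasure,
    integral_exp_inner_gaussMeasure, integral_exp_inner_gaussMeasure, hsum]
  simp only [integral_const, probReal_univ, one_smul]
  linear_combination ((1 - ε) * ε + ε ^ 2 * Real.exp (inner ℝ u v) *
      (Real.exp (-‖v‖ ^ 2 / 2) * Real.exp (‖v‖ ^ 2 / 2))) * hcancel u +
    ((1 - ε) * ε + ε ^ 2 * Real.exp (inner ℝ u v)) * hcancel v

/-- The second moment of the likelihood ratio as a double average over sign vectors. -/
theorem integral_likRatioRadem_sq (d n : ℕ) (ε r : ℝ) :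
    ∫ X, (likRatioRadem d n ε r X) ^ 2 ∂(Measure.pi fun _ : Fin n => gaussMeasure d) =
      ((2 : ℝ) ^ d)⁻¹ ^ 2 * ∑ ω : Fin d → Bool, ∑ ω' : Fin d → Bool,
        (1 + ε ^ 2 * (Real.exp (inner ℝ ((r / Real.sqrt d) • sgnVec ω)
          ((r / Real.sqrt d) • sgnVec ω')) - 1)) ^ n := by
  simp_rw [likRatioRadem, mul_pow]
  rw [integral_const_mul]
  congr 1
  simp_rw [sq (∑ ω : Fin d → Bool, _), Finset.sum_mul_sum, ← Finset.prod_mul_distrib]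
  have hint (ω ω' : Fin d → Bool) := Integrable.fintype_prod (ι := Fin n)
    (fun _ => integrable_contaminated_ratio_mul ε ((r / Real.sqrt d) • sgnVec ω)
      ((r / Real.sqrt d) • sgnVec ω'))
  rw [integral_finsetSum _ fun ω _ => integrable_finsetSum _ fun ω' _ => hint ω ω']
  refine Finset.sum_congr rfl fun ω _ => ?_
  rw [integral_finsetSum _ fun ω' _ => hint ω ω']
  refine Finset.sum_congr rfl fun ω' _ => ?_
  rw [← integral_contaminated_ratio_mul]
  simpa using integral_fintype_prod_eq_pow (ι := Fin n) (μ := gaussMeasure d)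
    fun x => ((1 - ε) + ε * gaussDensity d (x - (r / Real.sqrt d) • sgnVec ω) / gaussDensity d x) *
        ((1 - ε) + ε * gaussDensity d (x - (r / Real.sqrt d) • sgnVec ω') / gaussDensity d x)

/-- Integration against independent Rademacher coordinates is averaging over sign vectors. -/
theorem integral_pi_radem {d : ℕ} {f : (Fin d → ℝ) → ℝ} (hf : Measurable f) :
    ∫ w, f w ∂(Measure.pi fun _ : Fin d => radem) =
      ((2 : ℝ) ^ d)⁻¹ * ∑ ω : Fin d → Bool, f fun j => if ω j then 1 else -1 := by
  let ν : Measure Bool := (2 : ENNReal)⁻¹ • Measure.count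
  let s : Bool → ℝ := fun b => if b then 1 else -1
  have : IsFiniteMeasure ν := Measure.smul_finite _ (by simp)
  have hs : Measurable s := measurable_of_finite s
  have hν : radem = ν.map s := by
    rw [Measure.map_smul, Measure.count, Measure.sum_fintype, Fintype.sum_bool,
      Measure.map_add _ _ hs, Measure.map_dirac' hs, Measure.map_dirac' hs, smul_add]
    simp [radem, s]
  rw [hν, ← Measure.pi_map_pi (fun _ => hs.aemeasurable),
    integral_map (measurable_of_finite _).aemeasurable hf.aestronglyMeasurable,
    integral_fintype .of_finite,
    Finset.mul_sum]
  refine Finset.sum_congr rfl fun ω _ => ?_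
  simp [measureReal_def, Measure.pi_singleton, ν, s]

theorem inner_smul_sgnVec {d : ℕ} (r : ℝ) (ω ω' : Fin d → Bool) :
    inner ℝ ((r / Real.sqrt d) • sgnVec ω) ((r / Real.sqrt d) • sgnVec ω') =
      r ^ 2 / d * ∑ j, if ω j == ω' j then (1 : ℝ) else -1 := by
  rw [real_inner_smul_left, real_inner_smul_right, ← mul_assoc, div_mul_div_comm,
    Real.mul_self_sqrt (Nat.cast_nonneg d), ← sq, PiLp.inner_apply]
  congr 1
  refine Finset.sum_congr rfl fun j _ => ?_
  cases h : ω j <;> cases h' : ω' j <;> simp [sgnVec, h, h']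

/-- Averaging over the coordinatewise product with a fixed sign vector changes nothing. -/
theorem sum_beq_left {d : ℕ} (ω : Fin d → Bool) (g : (Fin d → Bool) → ℝ) :
    ∑ ω' : Fin d → Bool, g (fun j => ω j == ω' j) = ∑ ω' : Fin d → Bool, g ω' := by
  have hinv : Function.Involutive fun (ω' : Fin d → Bool) j => ω j == ω' j := fun ω' => by
    funext j
    cases h : ω j <;> cases h' : ω' j <;> simp [h, h']
  exact hinv.bijective.sum_comp g

/-- **Second moment of the likelihood ratio (Rademacher prior, `l₂` lower bound).**
`E₀[L_π²] = E[(1 + ε²(e^{(r²/d)Y} - 1))ⁿ]` where `Y = Σⱼ Wⱼ` is a sum of `d` i.i.d.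
Rademacher random variables. -/
theorem likRatio_secondMoment_radem (d n : ℕ) (hd : 1 ≤ d) (hn : 1 ≤ n)
    (ε r : ℝ) (hε : ε ∈ Set.Ioo (0 : ℝ) 1) (hr : 0 < r) :
    ∫ X : Fin n → EuclideanSpace ℝ (Fin d), (likRatioRadem d n ε r X) ^ 2
        ∂(Measure.pi fun _ : Fin n => gaussMeasure d) =
      ∫ w : Fin d → ℝ, (1 + ε ^ 2 * (Real.exp (r ^ 2 / d * ∑ j, w j) - 1)) ^ n
        ∂(Measure.pi fun _ : Fin d => radem) := by
  rw [integral_likRatioRadem_sq, integral_pi_radem (by fun_prop)]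
  simp_rw [inner_smul_sgnVec]
  have hshift (ω : Fin d → Bool) := sum_beq_left ω fun ω' =>
    (1 + ε ^ 2 * (Real.exp (r ^ 2 / d * ∑ j, if ω' j then (1 : ℝ) else -1) - 1)) ^ n
  simp_rw [hshift, Finset.sum_const, Finset.card_univ, Fintype.card_fun, Fintype.card_bool,
    Fintype.card_fin, nsmul_eq_mul]
  push_cast
  field_simp

end
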